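/- Let f ∈ Hol(α) be a bounded α-Hölder potential. Then there exists a unique Borel probability measure ν on X and a number λ > 0 such that ∫_X L_f φ dν = λ·∫_X φ dν for every φ ∈ C_b(X,ℝ) (that is, L_f^*ν = λν); moreover λ = ∫_X L_f 1 dν. -/

import Mathlib

open MeasureTheory Filter Topology BoundedContinuousFunction

noncomputable section

variable {E : Type*} [MetricSpace E]

/-- The metric on the sequence space `X = E^ℕ`:
`d_X(x,y) = ∑_{n=1}^∞ 2⁻ⁿ · min(d_E(x_n,y_n), 1)`. -/
def dX (x y : ℕ → E) : ℝ :=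
  ∑' n : ℕ, ((1 : ℝ) / 2) ^ (n + 1) * min (dist (x n) (y n)) 1

/-- The left shift `σ(x₁,x₂,x₃,…) = (x₂,x₃,…)`. -/
def shift (x : ℕ → E) : ℕ → E := fun n => x (n + 1)

theorem continuous_shift : Continuous (shift (E := E)) :=
  continuous_pi fun n => continuous_apply (n + 1)

/-- Prepending one symbol: `ax = (a, x₁, x₂, …)`. -/
def cons (a : E) (x : ℕ → E) : ℕ → E := fun n => Nat.casesOn n a x

/-- Prepending a finite word `a = (a₁,…,a_n)`. -/
def prepend {n : ℕ} (a : Fin n → E) (x : ℕ → E) : ℕ → E :=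
  fun k => if h : k < n then a ⟨k, h⟩ else x (k - n)

/-- Birkhoff sums `f_n = ∑_{k=0}^{n-1} f ∘ σᵏ`. -/
def birkhoff (f : (ℕ → E) → ℝ) (n : ℕ) (x : ℕ → E) : ℝ :=
  ∑ k ∈ Finset.range n, f (shift^[k] x)

/-- Boundedness of a real-valued function on `X`. -/
def Bdd (g : (ℕ → E) → ℝ) : Prop := ∃ M : ℝ, ∀ x, |g x| ≤ M

/-- `g` is `α`-Hölder with constant `C` (w.r.t. the metric `dX`). -/
def HolderConst (α C : ℝ) (g : (ℕ → E) → ℝ) : Prop :=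
  ∀ x y, |g x - g y| ≤ C * dX x y ^ α

/-- `g ∈ Hol(α)`: bounded, continuous and `α`-Hölder. -/
def MemHol (α : ℝ) (g : (ℕ → E) → ℝ) : Prop :=
  Continuous g ∧ Bdd g ∧ ∃ C : ℝ, HolderConst α C g

/-- `g ∈ C_b(X,ℝ)`: bounded and continuous. -/
def MemCb (g : (ℕ → E) → ℝ) : Prop := Continuous g ∧ Bdd g

/-- The Hölder seminorm `D_α(g) = sup_{x ≠ y} |g x - g y| / d_X(x,y)^α`. -/
def Dalpha (α : ℝ) (g : (ℕ → E) → ℝ) : ℝ :=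
  sSup {r : ℝ | ∃ x y : ℕ → E, x ≠ y ∧ r = |g x - g y| / dX x y ^ α}

/-- The supremum norm `‖g‖_∞`. -/
def supNorm (g : (ℕ → E) → ℝ) : ℝ := ⨆ x : ℕ → E, |g x|

/-- The Hölder norm `‖g‖_α = ‖g‖_∞ + D_α(g)`. -/
def alphaNorm (α : ℝ) (g : (ℕ → E) → ℝ) : ℝ := supNorm g + Dalpha α g

variable [MeasurableSpace E] [BorelSpace E]

/-- The Ruelle transfer operator `L_f φ(x) = ∫_E e^{f(ax)} φ(ax) dp(a)`. -/
def ruelle (p : Measure E) (f φ : (ℕ → E) → ℝ) : (ℕ → E) → ℝ :=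
  fun x => ∫ a, Real.exp (f (cons a x)) * φ (cons a x) ∂p

/-- The normalized operators `P^m_n(φ) = L_f^m(φ · L_f^n 1) / L_f^{m+n} 1`. -/
def Pmn (p : Measure E) (f : (ℕ → E) → ℝ) (m n : ℕ) (φ : (ℕ → E) → ℝ) : (ℕ → E) → ℝ :=
  fun x => (ruelle p f)^[m] (fun y => φ y * (ruelle p f)^[n] (fun _ => 1) y) x /
    (ruelle p f)^[m + n] (fun _ => 1) x

/-- The equivalent bounded metric `d̄(x,y) = min{1, 4 C_f d_X(x,y)^α}`. -/
def dbar (Cf α : ℝ) (x y : ℕ → E) : ℝ := min 1 (4 * Cf * dX x y ^ α)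

/-- The Wasserstein distance associated to `d̄`, via Kantorovich duality. -/
def wass (Cf α : ℝ) (μ₁ μ₂ : Measure (ℕ → E)) : ℝ :=
  sSup {r : ℝ | ∃ g : (ℕ → E) → ℝ,
    (∀ x y, |g x - g y| ≤ dbar Cf α x y) ∧ r = (∫ x, g x ∂μ₁) - ∫ x, g x ∂μ₂}

/-!
The conformal probability measures are the fixed points of `N μ = L_f^* μ / (L_f^* μ)(X)`, a
continuous map on probability measures with `∫ φ d(N^n μ) = ∫ L_f^n φ dμ / ∫ L_f^n 1 dμ`. Since `f`
is Hölder and prepending a symbol halves distances, `L_f` maps a sufficiently wide cone of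
log-Hölder functions into a strictly narrower one. As in Birkhoff's contraction theorem, this
pinches `L_f^n φ` between `a_n • L_f^n 1` and `(a_n + δ_n) • L_f^n 1` with `δ_n → 0`, for every `φ`
in the cone. Hence any two orbits of `N` coalesce when tested on the cone. Nonnegative bounded
continuous functions of finitely many coordinates enter the cone as well, because `L_f` forgets one
coordinate at a time, and they separate measures. So `N` has at most one fixed point, and every
cluster point of an orbit is one. Cluster points exist: the `j`-th marginal of `N^n p^ℕ` is at most
a multiple of `p` depending on `j` only, so the orbit is tight.
-/

section Exponential

theorem sub_mul_exp_le_exp_sub_exp (a b : ℝ) :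
    (a - b) * Real.exp b ≤ Real.exp a - Real.exp b := by
  have h := mul_le_mul_of_nonneg_right (Real.add_one_le_exp (a - b)) (Real.exp_pos b).le
  rw [← Real.exp_add, sub_add_cancel] at h
  linarith

theorem exists_mul_exp_sub_exp_neg_le {K K' : ℝ} (hK' : 0 ≤ K') (hK : K' < K) :
    ∃ ε : ℝ, 0 < ε ∧ ε ≤ 1 ∧ ∀ s ∈ Set.Icc (0 : ℝ) 1,
      ε * (Real.exp (K * s) - Real.exp (-(K' * s))) ≤ Real.exp (K * s) - Real.exp (K' * s) := by
  have hgap : 0 < K - K' := sub_pos.2 hK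
  have hsum : 0 < K + K' := by linarith
  have hden : 0 < (K + K') * Real.exp K := by positivity
  have hε : 0 < (K - K') / ((K + K') * Real.exp K) := div_pos hgap hden
  refine ⟨_, hε, ?_, fun s ⟨hs₀, hs₁⟩ => ?_⟩
  · rw [div_le_one hden]
    nlinarith [Real.one_le_exp (hK'.trans hK.le)]
  have hlower : (K - K') * s ≤ Real.exp (K * s) - Real.exp (K' * s) := by
    have h := sub_mul_exp_le_exp_sub_exp (K * s) (K' * s)
    have hone : 1 ≤ Real.exp (K' * s) := Real.one_le_exp (by positivity)
    nlinarith [mul_nonneg hgap.le hs₀]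
  have hupper : Real.exp (K * s) - Real.exp (-(K' * s)) ≤ (K + K') * Real.exp K * s := by
    have h := sub_mul_exp_le_exp_sub_exp (-(K' * s)) (K * s)
    have hexp : Real.exp (K * s) ≤ Real.exp K :=
      Real.exp_le_exp.2 (mul_le_of_le_one_right (hK'.trans hK.le) hs₁)
    nlinarith [mul_nonneg hsum.le hs₀]
  calc (K - K') / ((K + K') * Real.exp K) * (Real.exp (K * s) - Real.exp (-(K' * s)))
      ≤ (K - K') / ((K + K') * Real.exp K) * ((K + K') * Real.exp K * s) := by gcongr
    _ = (K - K') * s := by field_simp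
    _ ≤ _ := hlower

end Exponential

section FixedPoint

theorem existsUnique_isFixedPt_of_coalescing {X ι : Type*} [TopologicalSpace X] {T : X → X}
    (hT : Continuous T) {φ : ι → X → ℝ} (hφ : ∀ i, Continuous (φ i))
    (hsep : ∀ x y, (∀ i, φ i x = φ i y) → x = y)
    (hcoal : ∀ i x y, Tendsto (fun n => φ i (T^[n] x) - φ i (T^[n] y)) atTop (𝓝 0))
    {K : Set X} (hK : IsCompact K) {x₀ : X} (horbit : ∀ n, T^[n] x₀ ∈ K) :
    ∃! x, Function.IsFixedPt T x := by
  obtain ⟨x, -, hx⟩ : ∃ x ∈ K, ↑((hyperfilter ℕ).map fun n => T^[n] x₀) ≤ 𝓝 x :=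
    hK.ultrafilter_le_nhds _ (tendsto_principal.2 (.of_forall horbit))
  have horbit_tendsto : Tendsto (fun n => T^[n] x₀) (hyperfilter ℕ) (𝓝 x) := hx
  refine ⟨x, hsep _ _ fun i => ?_, fun y hy => hsep _ _ fun i => ?_⟩
  · have hlim : Tendsto (fun n => φ i (T^[n] (T x₀)) - φ i (T^[n] x₀)) (hyperfilter ℕ)
        (𝓝 (φ i (T x) - φ i x)) := by
      simp only [← Function.iterate_succ_apply, Function.iterate_succ_apply']
      exact (((hφ i).comp hT).tendsto x |>.comp horbit_tendsto).sub
        (((hφ i).tendsto x).comp horbit_tendsto)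
    exact sub_eq_zero.1 (tendsto_nhds_unique hlim
      ((hcoal i (T x₀) x₀).mono_left Nat.hyperfilter_le_atTop))
  · have hlim : Tendsto (fun n => φ i (T^[n] y) - φ i (T^[n] x₀)) (hyperfilter ℕ)
        (𝓝 (φ i y - φ i x)) := by
      simp only [(hy.iterate _).eq]
      exact tendsto_const_nhds.sub (((hφ i).tendsto x).comp horbit_tendsto)
    exact sub_eq_zero.1 (tendsto_nhds_unique hlim
      ((hcoal i y x₀).mono_left Nat.hyperfilter_le_atTop))

end FixedPoint

section Tightness

theorem isTightMeasureSet_of_le_smul {X : Type*} [TopologicalSpace X] [MeasurableSpace X]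
    {p : Measure X} (hp : IsTightMeasureSet {p}) {S : Set (Measure X)} {c : ENNReal} (hc : c ≠ ⊤)
    (hS : ∀ μ ∈ S, μ ≤ c • p) : IsTightMeasureSet S := by
  rw [isTightMeasureSet_iff_exists_isCompact_measure_compl_le] at hp ⊢
  intro ε hε
  obtain ⟨K, hK, hpK⟩ := hp (ε / c) (ENNReal.div_pos hε.ne' hc)
  refine ⟨K, hK, fun μ hμ => ?_⟩
  calc μ Kᶜ ≤ c * p Kᶜ := hS μ hμ Kᶜ
    _ ≤ c * (ε / c) := by gcongr; exact hpK p rfl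
    _ ≤ ε := ENNReal.mul_div_le

theorem isTightMeasureSet_pi {ι : Type*} [Countable ι] {X : ι → Type*}
    [∀ i, TopologicalSpace (X i)] [∀ i, MeasurableSpace (X i)] {S : Set (Measure (∀ i, X i))}
    (hS : ∀ i, IsTightMeasureSet ((fun μ => μ.map (Function.eval i)) '' S)) :
    IsTightMeasureSet S := by
  simp only [isTightMeasureSet_iff_exists_isCompact_measure_compl_le] at hS ⊢
  intro ε hε
  obtain ⟨ε', hε', hsum⟩ := ENNReal.exists_pos_sum_of_countable' hε.ne' ι
  choose K hK hSK using fun i => hS i (ε' i) (hε' i)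
  refine ⟨Set.univ.pi K, isCompact_univ_pi hK, fun μ hμ => ?_⟩
  have hcover : (Set.univ.pi K)ᶜ ⊆ ⋃ i, Function.eval i ⁻¹' (K i)ᶜ := fun x hx => by
    simpa [Set.mem_pi] using hx
  calc μ (Set.univ.pi K)ᶜ ≤ ∑' i, μ (Function.eval i ⁻¹' (K i)ᶜ) :=
        (measure_mono hcover).trans (measure_iUnion_le _)
    _ ≤ ∑' i, ε' i := by
        gcongr with i
        exact (Measure.le_map_apply (measurable_pi_apply i).aemeasurable _).trans
          (hSK i _ (Set.mem_image_of_mem _ hμ))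
    _ ≤ ε := hsum.le

end Tightness

section Integral

theorem integral_pos_of_forall_pos {X : Type*} [MeasurableSpace X] {μ : Measure X} [NeZero μ]
    {g : X → ℝ} (hg : Integrable g μ) (hpos : ∀ x, 0 < g x) : 0 < ∫ x, g x ∂μ := by
  rw [integral_pos_iff_support_of_nonneg (fun x => (hpos x).le) hg,
    Function.support_eq_univ fun x => (hpos x).ne']
  exact NeZero.pos _

theorem tilted_le_smul {X : Type*} [MeasurableSpace X] {μ : Measure X} [IsProbabilityMeasure μ]
    {f : X → ℝ} (hf : AEMeasurable f μ) {B : ℝ} (hB : ∀ᵐ x ∂μ, |f x| ≤ B) :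
    μ.tilted f ≤ ENNReal.ofReal (Real.exp (2 * B)) • μ := by
  have hint : Integrable (fun x => Real.exp (f x)) μ :=
    .of_bound (Real.measurable_exp.comp_aemeasurable hf).aestronglyMeasurable (Real.exp B) <|
      hB.mono fun x hx => by simpa using (abs_le.1 hx).2
  have hmass : Real.exp (-B) ≤ ∫ x, Real.exp (f x) ∂μ := by
    simpa using integral_mono_ae (integrable_const (Real.exp (-B))) hint <|
      hB.mono fun x hx => Real.exp_le_exp.2 (abs_le.1 hx).1
  have hdensity : ∀ᵐ x ∂μ, Real.exp (f x) / ∫ y, Real.exp (f y) ∂μ ≤ Real.exp (2 * B) := by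
    filter_upwards [hB] with x hx
    calc Real.exp (f x) / ∫ y, Real.exp (f y) ∂μ ≤ Real.exp B / Real.exp (-B) := by
          gcongr
          exact (abs_le.1 hx).2
      _ = Real.exp (2 * B) := by rw [← Real.exp_sub]; congr 1; ring
  refine Measure.le_iff.2 fun s hs => ?_
  rw [tilted_apply' _ _ hs, Measure.smul_apply, smul_eq_mul, ← setLIntegral_const]
  exact lintegral_mono_ae <| ae_restrict_of_ae <|
    hdensity.mono fun x hx => ENNReal.ofReal_le_ofReal hx

end Integral

section SequenceSpace

variable {E : Type*} [MetricSpace E]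

theorem summable_dX (x y : ℕ → E) :
    Summable fun n : ℕ => ((1 : ℝ) / 2) ^ (n + 1) * min (dist (x n) (y n)) 1 := by
  refine Summable.of_nonneg_of_le (fun n => by positivity)
    (fun n => mul_le_of_le_one_right (by positivity) (min_le_right _ _)) ?_
  exact (summable_nat_add_iff 1).2 summable_geometric_two

theorem dX_nonneg (x y : ℕ → E) : 0 ≤ dX x y :=
  tsum_nonneg fun n => by positivity

theorem dX_le_one (x y : ℕ → E) : dX x y ≤ 1 := by
  have hgeom : HasSum (fun n : ℕ => ((1 : ℝ) / 2) ^ (n + 1)) 1 := by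
    simpa [pow_succ] using hasSum_geometric_two.mul_right (1 / 2 : ℝ)
  exact hasSum_le (fun n => mul_le_of_le_one_right (by positivity) (min_le_right _ _))
    (summable_dX x y).hasSum hgeom

theorem dX_comm (x y : ℕ → E) : dX x y = dX y x := by
  simp only [dX, dist_comm]

theorem dX_cons (a : E) (x y : ℕ → E) : dX (cons a x) (cons a y) = dX x y * (1 / 2) := by
  rw [dX, (summable_dX _ _).tsum_eq_zero_add, dX, ← tsum_mul_right]
  have hhead : min (dist (cons a x 0) (cons a y 0)) 1 = 0 := by simp [cons]
  rw [hhead, mul_zero, zero_add]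
  exact tsum_congr fun n => by rw [pow_succ]; exact mul_right_comm _ _ _

theorem dX_rpow_mem_Icc {α : ℝ} (hα : 0 ≤ α) (x y : ℕ → E) :
    dX x y ^ α ∈ Set.Icc (0 : ℝ) 1 :=
  ⟨Real.rpow_nonneg (dX_nonneg x y) α, Real.rpow_le_one (dX_nonneg x y) (dX_le_one x y) hα⟩

theorem continuous_cons : Continuous fun q : E × (ℕ → E) => cons q.1 q.2 := by
  refine continuous_pi fun n => ?_
  cases n with
  | zero => exact continuous_fst
  | succ n => exact (continuous_apply n).comp continuous_snd

end SequenceSpace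

section MemCb

variable {E : Type*} [MetricSpace E] {φ ψ : (ℕ → E) → ℝ}

theorem memCb_iff_exists_boundedContinuousFunction :
    MemCb φ ↔ ∃ g : (ℕ → E) →ᵇ ℝ, ⇑g = φ := by
  refine ⟨fun ⟨hcont, M, hM⟩ => ⟨.ofNormedAddCommGroup φ hcont M hM, rfl⟩, ?_⟩
  rintro ⟨g, rfl⟩
  exact ⟨g.continuous, ‖g‖, g.norm_coe_le_norm⟩

theorem memCb_const (c : ℝ) : MemCb fun _ : ℕ → E => c :=
  ⟨continuous_const, |c|, fun _ => le_rfl⟩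

theorem MemCb.sub (hφ : MemCb φ) (hψ : MemCb ψ) : MemCb (φ - ψ) := by
  rw [memCb_iff_exists_boundedContinuousFunction] at *
  obtain ⟨⟨g, rfl⟩, ⟨h, rfl⟩⟩ := And.intro hφ hψ
  exact ⟨g - h, rfl⟩

theorem MemCb.mul (hφ : MemCb φ) (hψ : MemCb ψ) : MemCb (φ * ψ) := by
  rw [memCb_iff_exists_boundedContinuousFunction] at *
  obtain ⟨⟨g, rfl⟩, ⟨h, rfl⟩⟩ := And.intro hφ hψ
  exact ⟨g * h, rfl⟩

theorem MemCb.smul (hφ : MemCb φ) (c : ℝ) : MemCb (c • φ) :=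
  (memCb_const c).mul hφ

theorem MemCb.exp (hφ : MemCb φ) : MemCb fun x => Real.exp (φ x) := by
  obtain ⟨hcont, M, hM⟩ := hφ
  refine ⟨hcont.rexp, Real.exp M, fun x => ?_⟩
  rw [Real.abs_exp]
  exact Real.exp_le_exp.2 (abs_le.1 (hM x)).2

theorem MemCb.exists_bound (hφ : MemCb φ) : ∃ M : ℝ, 0 ≤ M ∧ ∀ x, |φ x| ≤ M := by
  obtain ⟨-, M, hM⟩ := hφ
  exact ⟨|M|, abs_nonneg M, fun x => (hM x).trans (le_abs_self M)⟩

variable [MeasurableSpace E] [BorelSpace E]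

theorem MemCb.integrable_cons (hφ : MemCb φ) (p : Measure E) [IsFiniteMeasure p] (x : ℕ → E) :
    Integrable (fun a => φ (cons a x)) p := by
  obtain ⟨hcont, M, hM⟩ := hφ
  refine .of_bound (Continuous.aestronglyMeasurable ?_) M (.of_forall fun a => hM _)
  exact hcont.comp (continuous_cons.comp (.prodMk_left x))

variable [SecondCountableTopology E]

theorem MemCb.integrable (hφ : MemCb φ) (μ : Measure (ℕ → E)) [IsFiniteMeasure μ] :
    Integrable φ μ := by
  obtain ⟨hcont, M, hM⟩ := hφ
  exact .of_bound hcont.aestronglyMeasurable M (.of_forall hM)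

theorem MemCb.continuous_integral (hφ : MemCb φ) :
    Continuous fun μ : ProbabilityMeasure (ℕ → E) => ∫ x, φ x ∂(μ : Measure (ℕ → E)) := by
  obtain ⟨g, rfl⟩ := memCb_iff_exists_boundedContinuousFunction.1 hφ
  exact ProbabilityMeasure.continuous_integral_boundedContinuousFunction g

end MemCb

section Ruelle

variable {E : Type*} [MeasurableSpace E] {p : Measure E} {f φ ψ : (ℕ → E) → ℝ}

theorem ruelle_smul (c : ℝ) (φ : (ℕ → E) → ℝ) : ruelle p f (c • φ) = c • ruelle p f φ := by
  ext x
  simp only [ruelle, Pi.smul_apply, smul_eq_mul, mul_left_comm, integral_const_mul]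

theorem iterate_ruelle_smul (c : ℝ) (φ : (ℕ → E) → ℝ) (n : ℕ) :
    (ruelle p f)^[n] (c • φ) = c • (ruelle p f)^[n] φ :=
  Function.Commute.iterate_left (f := ruelle p f) (g := (c • ·)) (ruelle_smul c) n φ

variable [MetricSpace E] [BorelSpace E] [IsFiniteMeasure p]

theorem memCb_ruelle (hf : MemCb f) (hφ : MemCb φ) : MemCb (ruelle p f φ) := by
  have hfφ := hf.exp.mul hφ
  obtain ⟨hcont, M, hM⟩ := id hfφ
  have hbound (x : ℕ → E) : ∀ᵐ a ∂p, ‖Real.exp (f (cons a x)) * φ (cons a x)‖ ≤ M :=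
    .of_forall fun a => hM (cons a x)
  refine ⟨?_, M * p.real Set.univ, fun x => norm_integral_le_of_norm_le_const (hbound x)⟩
  exact continuous_of_dominated (fun x => (hfφ.integrable_cons p x).aestronglyMeasurable)
    hbound (integrable_const M)
    (.of_forall fun a => hcont.comp (continuous_cons.comp (.prodMk_right a)))

theorem ruelle_mono (hf : MemCb f) (hφ : MemCb φ) (hψ : MemCb ψ) (h : φ ≤ ψ) :
    ruelle p f φ ≤ ruelle p f ψ := fun x =>
  integral_mono ((hf.exp.mul hφ).integrable_cons p x) ((hf.exp.mul hψ).integrable_cons p x)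
    fun _ => mul_le_mul_of_nonneg_left (h _) (Real.exp_pos _).le

theorem ruelle_sub (hf : MemCb f) (hφ : MemCb φ) (hψ : MemCb ψ) :
    ruelle p f (φ - ψ) = ruelle p f φ - ruelle p f ψ := by
  ext x
  simp only [ruelle, Pi.sub_apply, mul_sub]
  exact integral_sub ((hf.exp.mul hφ).integrable_cons p x) ((hf.exp.mul hψ).integrable_cons p x)

theorem ruelle_pos [NeZero p] (hf : MemCb f) (hφ : MemCb φ) (hpos : ∀ x, 0 < φ x) (x : ℕ → E) :
    0 < ruelle p f φ x :=
  integral_pos_of_forall_pos ((hf.exp.mul hφ).integrable_cons p x) fun _ =>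
    mul_pos (Real.exp_pos _) (hpos _)

theorem memCb_iterate_ruelle (hf : MemCb f) (hφ : MemCb φ) (n : ℕ) :
    MemCb ((ruelle p f)^[n] φ) :=
  Function.Iterate.rec MemCb hφ (fun _ => memCb_ruelle hf) n

theorem iterate_ruelle_mono (hf : MemCb f) (hφ : MemCb φ) (hψ : MemCb ψ) (h : φ ≤ ψ) (n : ℕ) :
    (ruelle p f)^[n] φ ≤ (ruelle p f)^[n] ψ := by
  induction n with
  | zero => exact h
  | succ n ih =>
    simp only [Function.iterate_succ_apply']
    exact ruelle_mono hf (memCb_iterate_ruelle hf hφ n) (memCb_iterate_ruelle hf hψ n) ih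

theorem iterate_ruelle_pos [NeZero p] (hf : MemCb f) (hφ : MemCb φ) (hpos : ∀ x, 0 < φ x)
    (n : ℕ) (x : ℕ → E) : 0 < (ruelle p f)^[n] φ x := by
  induction n generalizing x with
  | zero => exact hpos x
  | succ n ih =>
    rw [Function.iterate_succ_apply']
    exact ruelle_pos hf (memCb_iterate_ruelle hf hφ n) ih x

end Ruelle

/-- The cone of nonnegative bounded continuous functions whose logarithm is `α`-Hölder with constant
`K` along pairs of points sharing their first `k` coordinates. The estimate is multiplicative so
that zeros are allowed. -/
structure LogHolder {E : Type*} [MetricSpace E] (α K : ℝ) (k : ℕ) (φ : (ℕ → E) → ℝ) : Prop where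
  memCb : MemCb φ
  nonneg : ∀ x, 0 ≤ φ x
  le_exp_mul : ∀ x y, (∀ i < k, x i = y i) → φ x ≤ Real.exp (K * dX x y ^ α) * φ y

/-- `L_f` maps the log-Hölder cone of constant `K` into the narrower one of constant `K'`, and
forgets one coordinate. The gap between the two constants is what makes `L_f` contract. -/
structure ContractsLogHolder {E : Type*} [MetricSpace E] [MeasurableSpace E] (p : Measure E)
    (f : (ℕ → E) → ℝ) (α K K' : ℝ) : Prop where
  memCb : MemCb f
  exponent_nonneg : 0 ≤ α
  const_nonneg : 0 ≤ K'
  const_lt : K' < K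
  map_ruelle : ∀ {k : ℕ} {φ : (ℕ → E) → ℝ}, LogHolder α K k φ →
    LogHolder α K' (k - 1) (ruelle p f φ)

/-- `u` lies between `a • v` and `(a + G) • v` for the order defined by the cone
`LogHolder α K 0`. -/
def Pinched {E : Type*} [MetricSpace E] (α K a G : ℝ) (u v : (ℕ → E) → ℝ) : Prop :=
  LogHolder α K 0 (u - a • v) ∧ LogHolder α K 0 ((a + G) • v - u)

section LogHolder

variable {E : Type*} [MetricSpace E] {α K K' : ℝ} {k : ℕ} {φ u v : (ℕ → E) → ℝ}

theorem logHolder_of_eq_of_agree (hK : 0 ≤ K) (hφ : MemCb φ) (hnonneg : ∀ x, 0 ≤ φ x)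
    (hagree : ∀ x y, (∀ i < k, x i = y i) → φ x = φ y) : LogHolder α K k φ where
  memCb := hφ
  nonneg := hnonneg
  le_exp_mul x y hxy := by
    rw [hagree x y hxy]
    exact le_mul_of_one_le_left (hnonneg y) <| Real.one_le_exp <|
      mul_nonneg hK (Real.rpow_nonneg (dX_nonneg x y) α)

theorem logHolder_one (hK : 0 ≤ K) : LogHolder α K k fun _ : ℕ → E => 1 :=
  logHolder_of_eq_of_agree hK (memCb_const 1) (fun _ => zero_le_one) fun _ _ _ => rfl

theorem LogHolder.mono (hφ : LogHolder α K k φ) (hK : K ≤ K') : LogHolder α K' k φ where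
  memCb := hφ.memCb
  nonneg := hφ.nonneg
  le_exp_mul x y hxy := (hφ.le_exp_mul x y hxy).trans <| by
    have := dX_nonneg x y
    have := hφ.nonneg y
    gcongr

theorem LogHolder.smul {c : ℝ} (hc : 0 ≤ c) (hφ : LogHolder α K k φ) :
    LogHolder α K k (c • φ) where
  memCb := hφ.memCb.smul c
  nonneg x := mul_nonneg hc (hφ.nonneg x)
  le_exp_mul x y hxy := by
    simpa [mul_left_comm] using mul_le_mul_of_nonneg_left (hφ.le_exp_mul x y hxy) hc

theorem LogHolder.le_exp_const_mul (hα : 0 ≤ α) (hK : 0 ≤ K) (hφ : LogHolder α K 0 φ)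
    (x y : ℕ → E) : φ x ≤ Real.exp K * φ y := by
  refine (hφ.le_exp_mul x y (by simp)).trans ?_
  have := hφ.nonneg y
  gcongr
  exact mul_le_of_le_one_right hK (dX_rpow_mem_Icc hα x y).2

theorem exists_logHolder_sub_smul (E : Type*) [MetricSpace E] (hα : 0 ≤ α) (hK' : 0 ≤ K')
    (hK : K' < K) :
    ∃ ε : ℝ, 0 < ε ∧ ε ≤ 1 ∧ ∀ {k : ℕ} {u v : (ℕ → E) → ℝ} {t : ℝ}, LogHolder α K' k u →
      LogHolder α K' k v → 0 ≤ t → t • v ≤ ε • u → LogHolder α K k (u - t • v) := by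
  obtain ⟨ε, hε, hε_one, hexp⟩ := exists_mul_exp_sub_exp_neg_le hK' hK
  refine ⟨ε, hε, hε_one, fun {k u v t} hu hv ht htv => ⟨hu.memCb.sub (hv.memCb.smul t),
    fun x => ?_, fun x y hxy => ?_⟩⟩
  · exact sub_nonneg.2 ((htv x).trans (mul_le_of_le_one_left (hu.nonneg x) hε_one))
  have hs := dX_rpow_mem_Icc hα x y
  have hux := hu.le_exp_mul x y hxy
  have hvy := hv.le_exp_mul y x fun i hi => (hxy i hi).symm
  rw [dX_comm y x] at hvy
  simp only [Pi.sub_apply, Pi.smul_apply, smul_eq_mul]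
  set s := dX x y ^ α
  have hvx : Real.exp (-(K' * s)) * v y ≤ v x := by
    rwa [Real.exp_neg, inv_mul_le_iff₀ (Real.exp_pos _)]
  have hexp_le : Real.exp (-(K' * s)) ≤ Real.exp (K * s) :=
    Real.exp_le_exp.2 (by nlinarith [mul_nonneg hK' hs.1, mul_nonneg (hK'.trans hK.le) hs.1])
  have habsorb : (Real.exp (K * s) - Real.exp (-(K' * s))) * (t * v y) ≤
      (Real.exp (K * s) - Real.exp (K' * s)) * u y :=
    calc (Real.exp (K * s) - Real.exp (-(K' * s))) * (t * v y)
        ≤ (Real.exp (K * s) - Real.exp (-(K' * s))) * (ε * u y) :=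
          mul_le_mul_of_nonneg_left (htv y) (sub_nonneg.2 hexp_le)
      _ = ε * (Real.exp (K * s) - Real.exp (-(K' * s))) * u y := by ring
      _ ≤ _ := mul_le_mul_of_nonneg_right (hexp s hs) (hu.nonneg y)
  calc u x - t * v x
      ≤ Real.exp (K' * s) * u y - t * (Real.exp (-(K' * s)) * v y) := by gcongr
    _ ≤ Real.exp (K * s) * (u y - t * v y) := by linarith

theorem exists_pinched_of_le (E : Type*) [MetricSpace E] (hα : 0 ≤ α) (hK' : 0 ≤ K')
    (hK : K' < K) :
    ∃ ε : ℝ, 0 < ε ∧ ∀ {u v : (ℕ → E) → ℝ} {M : ℝ}, LogHolder α K' 0 u → LogHolder α K' 0 v →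
      0 ≤ M → u ≤ M • v → Pinched α K 0 (M / ε) u v := by
  obtain ⟨ε, hε, -, hsub⟩ := exists_logHolder_sub_smul E hα hK' hK
  refine ⟨ε, hε, fun {u v M} hu hv hM huv => ⟨by simpa using hu.mono hK.le, ?_⟩⟩
  have h := hsub (hv.smul (div_nonneg hM hε.le)) hu zero_le_one <| by
    rwa [one_smul, smul_smul, mul_div_cancel₀ _ hε.ne']
  rwa [one_smul, ← zero_add (M / ε)] at h

theorem Pinched.mem_Icc {a G : ℝ} (h : Pinched α K a G u v) :
    u ∈ Set.Icc (a • v) ((a + G) • v) :=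
  ⟨sub_nonneg.1 h.1.nonneg, sub_nonneg.1 h.2.nonneg⟩

end LogHolder

section Contraction

variable {E : Type*} [MetricSpace E] [MeasurableSpace E] {p : Measure E} {α K K' : ℝ} {k : ℕ}
  {f φ : (ℕ → E) → ℝ}

theorem ContractsLogHolder.const_pos (h : ContractsLogHolder p f α K K') : 0 < K :=
  h.const_nonneg.trans_lt h.const_lt

theorem ContractsLogHolder.map_iterate (h : ContractsLogHolder p f α K K') (hφ : LogHolder α K k φ)
    (n : ℕ) : LogHolder α K (k - n) ((ruelle p f)^[n] φ) := by
  induction n with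
  | zero => exact hφ
  | succ n ih =>
    rw [Function.iterate_succ_apply', ← Nat.sub_sub]
    exact (h.map_ruelle ih).mono h.const_lt.le

variable [BorelSpace E] [IsFiniteMeasure p]

theorem LogHolder.ruelle {C : ℝ} (hf : MemCb f) (hC : HolderConst α C f)
    (hφ : LogHolder α K k φ) :
    LogHolder α ((C + K) * (1 / 2) ^ α) (k - 1) (ruelle p f φ) where
  memCb := memCb_ruelle hf hφ.memCb
  nonneg x := integral_nonneg fun a => mul_nonneg (Real.exp_pos _).le (hφ.nonneg _)
  le_exp_mul x y hxy := by
    have hfφ := hf.exp.mul hφ.memCb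
    rw [_root_.ruelle, _root_.ruelle, ← integral_const_mul]
    refine integral_mono (hfφ.integrable_cons p x) ((hfφ.integrable_cons p y).const_mul _)
      fun a => ?_
    have hagree : ∀ i < k, cons a x i = cons a y i
      | 0, _ => rfl
      | i + 1, hi => hxy i (by lia)
    have hdist : dX (cons a x) (cons a y) ^ α = (1 / 2) ^ α * dX x y ^ α := by
      rw [dX_cons, Real.mul_rpow (dX_nonneg x y) (by norm_num), mul_comm]
    have hφa := hφ.le_exp_mul _ _ hagree
    have hfa := (abs_le.1 (hC (cons a x) (cons a y))).2
    rw [hdist] at hφa hfa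
    calc Real.exp (f (cons a x)) * φ (cons a x)
        ≤ Real.exp (f (cons a y) + C * ((1 / 2) ^ α * dX x y ^ α)) *
            (Real.exp (K * ((1 / 2) ^ α * dX x y ^ α)) * φ (cons a y)) := by
          have := hφ.nonneg (cons a x)
          gcongr
          linarith
      _ = Real.exp ((C + K) * (1 / 2) ^ α * dX x y ^ α) *
            (Real.exp (f (cons a y)) * φ (cons a y)) := by
          simp only [← mul_assoc, ← Real.exp_add]
          congr 2
          ring

theorem MemHol.exists_contractsLogHolder (hα : 0 < α) (hf : MemHol α f) :
    ∃ K K', ContractsLogHolder p f α K K' := by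
  obtain ⟨hcont, hbdd, C, hC⟩ := hf
  have hC' : HolderConst α |C| f := fun x y => (hC x y).trans <|
    mul_le_mul_of_nonneg_right (le_abs_self C) (Real.rpow_nonneg (dX_nonneg x y) α)
  have hr₀ : (0 : ℝ) ≤ (1 / 2) ^ α := by positivity
  have hr₁ : (1 / 2 : ℝ) ^ α < 1 := Real.rpow_lt_one (by norm_num) (by norm_num) hα
  set r : ℝ := (1 / 2) ^ α
  -- Any `K > |C| * r / (1 - r)` satisfies `(|C| + K) * r < K`; adding `1` covers `C = 0`.
  have hK : 0 ≤ (|C| + 1) / (1 - r) := div_nonneg (by positivity) (by linarith)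
  have hlt : (|C| + (|C| + 1) / (1 - r)) * r < (|C| + 1) / (1 - r) := by
    have hmul : (|C| + 1) / (1 - r) * (1 - r) = |C| + 1 := div_mul_cancel₀ _ (by linarith)
    nlinarith [mul_le_of_le_one_right (abs_nonneg C) hr₁.le]
  exact ⟨_, _, ⟨hcont, hbdd⟩, hα.le, mul_nonneg (add_nonneg (abs_nonneg C) hK) hr₀, hlt,
    .ruelle ⟨hcont, hbdd⟩ hC'⟩

theorem ContractsLogHolder.exists_ruelle_sub_smul (h : ContractsLogHolder p f α K K') :
    ∃ δ : ℝ, 0 < δ ∧ δ ≤ 1 ∧ ∀ {u v : (ℕ → E) → ℝ} {t : ℝ} {x₀ : ℕ → E}, LogHolder α K 0 u →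
      LogHolder α K 0 v → 0 ≤ t → t * v x₀ ≤ u x₀ →
      LogHolder α K 0 (ruelle p f u - (δ * t) • ruelle p f v) := by
  obtain ⟨ε, hε, hε_one, hsub⟩ :=
    exists_logHolder_sub_smul E h.exponent_nonneg h.const_nonneg h.const_lt
  have hK : 0 ≤ K := h.const_pos.le
  refine ⟨ε * Real.exp (-(2 * K)), by positivity,
    mul_le_one₀ hε_one (Real.exp_pos _).le (Real.exp_le_one_iff.2 (by linarith)),
    fun {u v t x₀} hu hv ht hx₀ => ?_⟩
  have hle : (Real.exp (-(2 * K)) * t) • v ≤ u := fun x =>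
    calc Real.exp (-(2 * K)) * t * v x ≤ Real.exp (-(2 * K)) * t * (Real.exp K * v x₀) := by
          gcongr
          exact hv.le_exp_const_mul h.exponent_nonneg hK x x₀
      _ = Real.exp (-K) * (t * v x₀) := by
          rw [show -K = -(2 * K) + K by ring, Real.exp_add]
          ring
      _ ≤ Real.exp (-K) * (Real.exp K * u x) := by
          refine mul_le_mul_of_nonneg_left ?_ (Real.exp_pos _).le
          exact hx₀.trans (hu.le_exp_const_mul h.exponent_nonneg hK x₀ x)
      _ = u x := by rw [← mul_assoc, ← Real.exp_add, neg_add_cancel, Real.exp_zero, one_mul]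
  refine hsub (h.map_ruelle hu) (h.map_ruelle hv) (by positivity) ?_
  rw [mul_assoc, ← smul_smul, ← ruelle_smul]
  exact smul_le_smul_of_nonneg_left (ruelle_mono h.memCb (hv.memCb.smul _) hu.memCb hle) hε.le

theorem ContractsLogHolder.exists_pinched_ruelle [Nonempty E] (h : ContractsLogHolder p f α K K') :
    ∃ θ : ℝ, 0 ≤ θ ∧ θ < 1 ∧ ∀ {u v : (ℕ → E) → ℝ} {a G : ℝ}, MemCb u → LogHolder α K 0 v →
      0 ≤ G → Pinched α K a G u v →
      ∃ a', Pinched α K a' (θ * G) (ruelle p f u) (ruelle p f v) := by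
  obtain ⟨δ, hδ, hδ_one, hsub⟩ := h.exists_ruelle_sub_smul
  refine ⟨1 - δ / 2, by linarith, by linarith, fun {u v a G} hu hv hG ⟨hlower, hupper⟩ => ?_⟩
  have hmap_lower := (h.map_ruelle hlower).mono h.const_lt.le
  have hmap_upper := (h.map_ruelle hupper).mono h.const_lt.le
  have hG' : 0 ≤ G / 2 := by positivity
  obtain ⟨x₀⟩ : Nonempty (ℕ → E) := inferInstance
  -- The two gaps add up to `G • v`, so one of them is at least half of it at `x₀`.
  obtain hhalf | hhalf : G / 2 * v x₀ ≤ (u - a • v) x₀ ∨ G / 2 * v x₀ ≤ ((a + G) • v - u) x₀ := by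
    by_contra! hlt
    simp only [Pi.sub_apply, Pi.smul_apply, smul_eq_mul] at hlt
    linarith [hlt.1, hlt.2]
  · refine ⟨a + δ * (G / 2), ?_, ?_⟩
    · have := hsub hlower hv hG' hhalf
      rwa [ruelle_sub h.memCb hu (hv.memCb.smul a), ruelle_smul, sub_sub, ← add_smul] at this
    · rw [ruelle_sub h.memCb (hv.memCb.smul _) hu, ruelle_smul] at hmap_upper
      convert hmap_upper using 3
      ring
  · refine ⟨a, ?_, ?_⟩
    · rwa [ruelle_sub h.memCb hu (hv.memCb.smul a), ruelle_smul] at hmap_lower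
    · have := hsub hupper hv hG' hhalf
      rw [ruelle_sub h.memCb (hv.memCb.smul _) hu, ruelle_smul, sub_right_comm, ← sub_smul] at this
      convert this using 3
      ring

theorem ContractsLogHolder.exists_pinched_iterate [Nonempty E]
    (h : ContractsLogHolder p f α K K') :
    ∃ θ : ℝ, 0 ≤ θ ∧ θ < 1 ∧ ∀ {u v : (ℕ → E) → ℝ} {a G : ℝ}, MemCb u → LogHolder α K 0 v →
      0 ≤ G → Pinched α K a G u v →
      ∀ n, ∃ a', Pinched α K a' (θ ^ n * G) ((ruelle p f)^[n] u) ((ruelle p f)^[n] v) := by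
  obtain ⟨θ, hθ, hθ_one, hstep⟩ := h.exists_pinched_ruelle
  refine ⟨θ, hθ, hθ_one, fun {u v a G} hu hv hG hpinched n => ?_⟩
  induction n with
  | zero => exact ⟨a, by simpa using hpinched⟩
  | succ n ih =>
    obtain ⟨b, hb⟩ := ih
    rw [pow_succ', mul_assoc, Function.iterate_succ_apply', Function.iterate_succ_apply']
    exact hstep (memCb_iterate_ruelle h.memCb hu n) (by simpa using h.map_iterate hv n)
      (by positivity) hb

theorem ContractsLogHolder.exists_pinched_one (h : ContractsLogHolder p f α K K')
    (hφ : LogHolder α K k φ) :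
    ∃ G : ℝ, 0 ≤ G ∧
      Pinched α K 0 G ((ruelle p f)^[k + 1] φ) ((ruelle p f)^[k + 1] fun _ => 1) := by
  have hsmooth {ψ : (ℕ → E) → ℝ} (hψ : LogHolder α K k ψ) :
      LogHolder α K' 0 ((ruelle p f)^[k + 1] ψ) := by
    simpa [Function.iterate_succ_apply'] using h.map_ruelle (h.map_iterate hψ k)
  obtain ⟨M, hM, hφM⟩ := hφ.memCb.exists_bound
  have hle : (ruelle p f)^[k + 1] φ ≤ M • (ruelle p f)^[k + 1] fun _ => 1 := by
    rw [← iterate_ruelle_smul]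
    refine iterate_ruelle_mono h.memCb hφ.memCb ((memCb_const 1).smul M) (fun x => ?_) _
    simpa using (abs_le.1 (hφM x)).2
  obtain ⟨ε, hε, hpinch⟩ :=
    exists_pinched_of_le E h.exponent_nonneg h.const_nonneg h.const_lt
  exact ⟨M / ε, by positivity, hpinch (hsmooth hφ) (hsmooth (logHolder_one h.const_pos.le)) hM hle⟩

theorem ContractsLogHolder.eventually_iterate_mem_Icc [Nonempty E]
    (h : ContractsLogHolder p f α K K') (hφ : LogHolder α K k φ) {δ : ℝ} (hδ : 0 < δ) :
    ∀ᶠ n in atTop, ∃ a : ℝ, (ruelle p f)^[n] φ ∈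
      Set.Icc (a • (ruelle p f)^[n] fun _ => 1) ((a + δ) • (ruelle p f)^[n] fun _ => 1) := by
  have hone (n : ℕ) : LogHolder α K 0 ((ruelle p f)^[n] fun _ : ℕ → E => 1) := by
    simpa using h.map_iterate (logHolder_one (k := 0) h.const_pos.le) n
  obtain ⟨G, hG, hinit⟩ := h.exists_pinched_one hφ
  obtain ⟨θ, hθ, hθ_one, hiter⟩ := h.exists_pinched_iterate
  have hgap : Tendsto (fun n => θ ^ n * G) atTop (𝓝 0) := by
    simpa using (tendsto_pow_atTop_nhds_zero_of_lt_one hθ hθ_one).mul_const G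
  filter_upwards [eventually_ge_atTop (k + 1),
    (tendsto_sub_atTop_nat (k + 1)).eventually (hgap.eventually_le_const hδ)] with n hkn hn
  obtain ⟨m, rfl⟩ := Nat.exists_eq_add_of_le' hkn
  rw [add_tsub_cancel_right] at hn
  obtain ⟨a, ha⟩ := hiter (memCb_iterate_ruelle h.memCb hφ.memCb _) (hone (k + 1)) hG hinit m
  rw [← Function.iterate_add_apply, ← Function.iterate_add_apply] at ha
  refine ⟨a, ha.mem_Icc.1, ha.mem_Icc.2.trans fun x => ?_⟩
  exact mul_le_mul_of_nonneg_right (by linarith) ((hone (m + (k + 1))).nonneg x)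

end Contraction

section Separation

variable {E : Type*} [MetricSpace E] [SecondCountableTopology E] [MeasurableSpace E] [BorelSpace E]

theorem measure_ext_of_logHolder {α K : ℝ} (hK : 0 ≤ K) {μ ν : Measure (ℕ → E)}
    [IsFiniteMeasure μ] [IsFiniteMeasure ν]
    (h : ∀ k φ, LogHolder α K k φ → ∫ x, φ x ∂μ = ∫ x, φ x ∂ν) : μ = ν := by
  refine IsProjectiveLimit.unique (P := fun I => ν.map I.restrict) (fun I => ?_) fun I => rfl
  have hmeas : Measurable (I.restrict (π := fun _ : ℕ => E)) := Finset.measurable_restrict I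
  refine ext_of_forall_lintegral_eq_of_IsFiniteMeasure fun g => ?_
  have hg : MemCb fun x : ℕ → E => (g (I.restrict x) : ℝ) :=
    ⟨NNReal.continuous_coe.comp (g.continuous.comp (Finset.continuous_restrict I)),
      (nndist g 0 : NNReal), fun x => by
        simpa only [NNReal.abs_eq] using NNReal.coe_le_coe.2 (NNReal.upper_bound g (I.restrict x))⟩
  obtain ⟨k, hk⟩ := Finset.exists_nat_subset_range I
  have hcylinder : LogHolder α K k fun x : ℕ → E => (g (I.restrict x) : ℝ) := by
    refine logHolder_of_eq_of_agree hK hg (fun x => (g _).2) fun x y hxy => ?_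
    have hrestrict : I.restrict x = I.restrict y :=
      funext fun i => hxy i (Finset.mem_range.1 (hk i.2))
    rw [hrestrict]
  rw [lintegral_map (by fun_prop) hmeas, lintegral_map (by fun_prop) hmeas,
    lintegral_coe_eq_integral _ (hg.integrable μ), lintegral_coe_eq_integral _ (hg.integrable ν),
    h k _ hcylinder]

end Separation

/-- The law of `ax` when `a ∼ p` and `x ∼ μ` are independent. -/
def consMeasure {E : Type*} [MeasurableSpace E] (p : Measure E) (μ : Measure (ℕ → E)) :
    Measure (ℕ → E) :=
  (p.prod μ).map fun q => cons q.1 q.2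

section ConsMeasure

variable {E : Type*} [MeasurableSpace E] {p : Measure E} {μ : Measure (ℕ → E)}
  [IsProbabilityMeasure μ]

theorem measurable_cons : Measurable fun q : E × (ℕ → E) => cons q.1 q.2 := by
  refine measurable_pi_lambda _ fun n => ?_
  cases n with
  | zero => exact measurable_fst
  | succ n => exact (measurable_pi_apply n).comp measurable_snd

theorem consMeasure_map_eval_zero : (consMeasure p μ).map (Function.eval 0) = p := by
  rw [consMeasure, Measure.map_map (measurable_pi_apply 0) measurable_cons]
  exact Measure.map_fst_prod.trans (by simp)

variable [IsProbabilityMeasure p]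

instance : IsProbabilityMeasure (consMeasure p μ) :=
  Measure.isProbabilityMeasure_map measurable_cons.aemeasurable

theorem consMeasure_map_eval_succ (j : ℕ) :
    (consMeasure p μ).map (Function.eval (j + 1)) = μ.map (Function.eval j) := by
  rw [consMeasure, Measure.map_map (measurable_pi_apply _) measurable_cons]
  have hcomp : (Function.eval (j + 1) ∘ fun q : E × (ℕ → E) => cons q.1 q.2) =
      Function.eval j ∘ Prod.snd := rfl
  rw [hcomp, ← Measure.map_map (measurable_pi_apply j) measurable_snd, Measure.map_snd_prod,
    measure_univ, one_smul]

theorem integral_consMeasure [MetricSpace E] [SecondCountableTopology E] [BorelSpace E]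
    {φ : (ℕ → E) → ℝ} (hφ : MemCb φ) :
    ∫ x, φ x ∂consMeasure p μ = ∫ x, ∫ a, φ (cons a x) ∂p ∂μ := by
  have hint : Integrable (fun q : E × (ℕ → E) => φ (cons q.1 q.2)) (p.prod μ) :=
    (hφ.integrable (consMeasure p μ)).comp_measurable measurable_cons
  rw [consMeasure, integral_map measurable_cons.aemeasurable hφ.1.aestronglyMeasurable,
    integral_prod_symm _ hint]

end ConsMeasure

/-- The probability measures on `E^ℕ` whose `j`-th marginal (counting from `0`) is at most
`D ^ (j + 1)` times `p`. -/
def dominatedMarginals {E : Type*} [MeasurableSpace E] (p : Measure E) (D : ENNReal) :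
    Set (ProbabilityMeasure (ℕ → E)) :=
  {μ | ∀ j, (μ : Measure (ℕ → E)).map (Function.eval j) ≤ D ^ (j + 1) • p}

section DominatedMarginals

variable {E : Type*} [MeasurableSpace E] {p : Measure E} {D : ENNReal}

theorem infinitePi_mem_dominatedMarginals [IsProbabilityMeasure p] (hD : 1 ≤ D) :
    (⟨Measure.infinitePi fun _ : ℕ => p, inferInstance⟩ : ProbabilityMeasure (ℕ → E)) ∈
      dominatedMarginals p D := by
  intro j
  have hmarginal := Measure.infinitePi_map_eval (fun _ : ℕ => p) j
  rw [ProbabilityMeasure.coe_mk, hmarginal]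
  exact Measure.le_iff'.2 fun s => le_mul_of_one_le_left zero_le (one_le_pow₀ hD)

theorem isCompact_closure_dominatedMarginals [MetricSpace E]
    [SecondCountableTopology E] [BorelSpace E] (hp : IsTightMeasureSet {p}) (hD : D ≠ ⊤) :
    IsCompact (closure (dominatedMarginals p D)) := by
  refine isCompact_closure_of_isTightMeasureSet (isTightMeasureSet_pi fun j => ?_)
  refine isTightMeasureSet_of_le_smul hp (ENNReal.pow_ne_top hD : D ^ (j + 1) ≠ ⊤) ?_
  rintro _ ⟨_, ⟨μ, hμ, rfl⟩, rfl⟩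
  exact hμ j

end DominatedMarginals

section IsConformal

variable {E : Type*} [MetricSpace E] [MeasurableSpace E]

/-- The conformality equation `L_f^* ν = lam • ν`, tested on `C_b(X, ℝ)`. -/
def IsConformal (p : Measure E) (f : (ℕ → E) → ℝ) (lam : ℝ) (ν : Measure (ℕ → E)) : Prop :=
  ∀ φ : (ℕ → E) → ℝ, MemCb φ → (∫ x, ruelle p f φ x ∂ν) = lam * ∫ x, φ x ∂ν

theorem IsConformal.eq_integral_ruelle_one {p : Measure E} {f : (ℕ → E) → ℝ} {lam : ℝ}
    {ν : Measure (ℕ → E)}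
    [IsProbabilityMeasure ν] (h : IsConformal p f lam ν) :
    lam = ∫ x, ruelle p f (fun _ => 1) x ∂ν := by
  simpa using (h _ (memCb_const 1)).symm

end IsConformal

section NormalizedDual

variable {E : Type*} [MetricSpace E] [SecondCountableTopology E] [MeasurableSpace E] [BorelSpace E]

/-- The action `μ ↦ L_f^* μ / (L_f^* μ)(X)` of the dual Ruelle operator on probability measures,
using that `L_f^* μ` has density `exp f` with respect to `consMeasure p μ`. -/
def normalizedDual (p : Measure E) [IsProbabilityMeasure p] {f : (ℕ → E) → ℝ} (hf : MemCb f)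
    (μ : ProbabilityMeasure (ℕ → E)) : ProbabilityMeasure (ℕ → E) :=
  ⟨(consMeasure p μ).tilted f, isProbabilityMeasure_tilted (hf.exp.integrable _)⟩

variable {p : Measure E} [IsProbabilityMeasure p] {f φ : (ℕ → E) → ℝ}

theorem integral_iterate_ruelle_one_pos (hf : MemCb f) (n : ℕ) (μ : Measure (ℕ → E))
    [IsProbabilityMeasure μ] : 0 < ∫ x, (ruelle p f)^[n] (fun _ => 1) x ∂μ :=
  integral_pos_of_forall_pos ((memCb_iterate_ruelle hf (memCb_const 1) n).integrable μ)
    (iterate_ruelle_pos hf (memCb_const 1) (fun _ => one_pos) n)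

theorem integral_normalizedDual (hf : MemCb f) (hφ : MemCb φ) (μ : ProbabilityMeasure (ℕ → E)) :
    ∫ x, φ x ∂(normalizedDual p hf μ : Measure (ℕ → E)) =
      (∫ x, ruelle p f φ x ∂μ) / ∫ x, ruelle p f (fun _ => 1) x ∂μ := by
  have hnum : ∫ x, Real.exp (f x) * φ x ∂consMeasure p μ = ∫ x, ruelle p f φ x ∂μ :=
    integral_consMeasure (hf.exp.mul hφ)
  have hden : ∫ x, Real.exp (f x) ∂consMeasure p μ = ∫ x, ruelle p f (fun _ => 1) x ∂μ := by
    simpa only [ruelle, mul_one] using integral_consMeasure (μ := (μ : Measure (ℕ → E))) hf.exp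
  rw [normalizedDual, ProbabilityMeasure.coe_mk, integral_tilted, hden, ← hnum, ← integral_div]
  simp only [smul_eq_mul, div_mul_eq_mul_div]

theorem integral_iterate_normalizedDual (hf : MemCb f) (hφ : MemCb φ)
    (μ : ProbabilityMeasure (ℕ → E)) (n : ℕ) :
    ∫ x, φ x ∂((normalizedDual p hf)^[n] μ : Measure (ℕ → E)) =
      (∫ x, (ruelle p f)^[n] φ x ∂μ) / ∫ x, (ruelle p f)^[n] (fun _ => 1) x ∂μ := by
  induction n generalizing φ with
  | zero => simp
  | succ n ih =>
    rw [Function.iterate_succ_apply', integral_normalizedDual hf hφ, ih (memCb_ruelle hf hφ),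
      ih (memCb_ruelle hf (memCb_const 1)), Function.iterate_succ_apply,
      Function.iterate_succ_apply,
      div_div_div_cancel_right₀ (integral_iterate_ruelle_one_pos hf n μ).ne']

theorem continuous_normalizedDual (hf : MemCb f) : Continuous (normalizedDual p hf) := by
  refine ProbabilityMeasure.continuous_iff_forall_continuous_integral.2 fun g => ?_
  have hg : MemCb g := memCb_iff_exists_boundedContinuousFunction.2 ⟨g, rfl⟩
  simp only [integral_normalizedDual hf hg]
  exact (memCb_ruelle hf hg).continuous_integral.div₀
    (memCb_ruelle hf (memCb_const 1)).continuous_integral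
    fun μ => (integral_iterate_ruelle_one_pos hf 1 μ).ne'

theorem integral_iterate_normalizedDual_mem_Icc (hf : MemCb f) (hφ : MemCb φ)
    (μ : ProbabilityMeasure (ℕ → E)) {n : ℕ} {a b : ℝ} (h : (ruelle p f)^[n] φ ∈
      Set.Icc (a • (ruelle p f)^[n] fun _ => 1) (b • (ruelle p f)^[n] fun _ => 1)) :
    ∫ x, φ x ∂((normalizedDual p hf)^[n] μ : Measure (ℕ → E)) ∈ Set.Icc a b := by
  have hφn := (memCb_iterate_ruelle (p := p) hf hφ n).integrable (μ : Measure (ℕ → E))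
  have hone := (memCb_iterate_ruelle (p := p) hf (memCb_const 1) n).integrable
    (μ : Measure (ℕ → E))
  have hpos := integral_iterate_ruelle_one_pos (p := p) hf n (μ : Measure (ℕ → E))
  rw [integral_iterate_normalizedDual hf hφ, Set.mem_Icc, le_div_iff₀ hpos, div_le_iff₀ hpos,
    ← integral_const_mul, ← integral_const_mul]
  exact ⟨integral_mono (hone.const_mul a) hφn h.1, integral_mono hφn (hone.const_mul b) h.2⟩

theorem tendsto_integral_iterate_normalizedDual_sub [Nonempty E] {α K K' : ℝ} {k : ℕ}
    (h : ContractsLogHolder p f α K K') (hφ : LogHolder α K k φ)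
    (μ ν : ProbabilityMeasure (ℕ → E)) :
    Tendsto (fun n => ∫ x, φ x ∂((normalizedDual p h.memCb)^[n] μ : Measure (ℕ → E)) -
      ∫ x, φ x ∂((normalizedDual p h.memCb)^[n] ν : Measure (ℕ → E))) atTop (𝓝 0) := by
  refine Metric.tendsto_nhds.2 fun δ hδ => ?_
  filter_upwards [h.eventually_iterate_mem_Icc hφ (half_pos hδ)] with n ⟨a, ha⟩
  have hdist := Real.dist_le_of_mem_Icc
    (integral_iterate_normalizedDual_mem_Icc h.memCb hφ.memCb μ ha)
    (integral_iterate_normalizedDual_mem_Icc h.memCb hφ.memCb ν ha)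
  rw [dist_zero_right, ← dist_eq_norm]
  linarith

theorem mapsTo_normalizedDual_dominatedMarginals (hf : MemCb f) {B : ℝ} (hB : ∀ x, |f x| ≤ B) :
    Set.MapsTo (normalizedDual p hf) (dominatedMarginals p (.ofReal (Real.exp (2 * B))))
      (dominatedMarginals p (.ofReal (Real.exp (2 * B)))) := by
  intro μ hμ j
  set D := ENNReal.ofReal (Real.exp (2 * B))
  have htilted : ((consMeasure p μ).tilted f).map (Function.eval j) ≤
      D • (consMeasure p μ).map (Function.eval j) := by
    rw [← Measure.map_smul]
    exact Measure.map_mono (tilted_le_smul hf.1.aemeasurable (.of_forall hB))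
      (measurable_pi_apply j)
  refine htilted.trans ?_
  cases j with
  | zero => rw [consMeasure_map_eval_zero, zero_add, pow_one]
  | succ j =>
    rw [consMeasure_map_eval_succ, pow_succ', mul_smul]
    gcongr
    exact hμ j

theorem isFixedPt_normalizedDual_iff (hf : MemCb f) {ν : ProbabilityMeasure (ℕ → E)} :
    Function.IsFixedPt (normalizedDual p hf) ν ↔
      IsConformal p f (∫ x, ruelle p f (fun _ => 1) x ∂(ν : Measure (ℕ → E))) ν := by
  have hne : ∫ x, ruelle p f (fun _ => 1) x ∂(ν : Measure (ℕ → E)) ≠ 0 :=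
    (integral_iterate_ruelle_one_pos hf 1 ν).ne'
  refine ⟨fun hfix φ hφ => ?_, fun hconf => ProbabilityMeasure.toMeasure_injective ?_⟩
  · have hint := integral_normalizedDual hf hφ (p := p) ν
    rw [hfix.eq] at hint
    rw [hint, mul_div_cancel₀ _ hne]
  · refine ext_of_forall_integral_eq_of_IsFiniteMeasure fun g => ?_
    have hg : MemCb g := memCb_iff_exists_boundedContinuousFunction.2 ⟨g, rfl⟩
    exact (integral_normalizedDual hf hg ν).trans <| by
      rw [hconf g hg]
      exact mul_div_cancel_left₀ _ hne

theorem existsUnique_isFixedPt_normalizedDual (hp : IsTightMeasureSet {p}) {α K K' : ℝ}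
    (h : ContractsLogHolder p f α K K') :
    ∃! ν, Function.IsFixedPt (normalizedDual p h.memCb) ν := by
  have : Nonempty E := nonempty_of_isProbabilityMeasure p
  obtain ⟨B, hB, hfB⟩ := h.memCb.exists_bound
  have hD : 1 ≤ ENNReal.ofReal (Real.exp (2 * B)) :=
    ENNReal.one_le_ofReal.2 (Real.one_le_exp (by positivity))
  refine existsUnique_isFixedPt_of_coalescing (continuous_normalizedDual h.memCb)
    (ι := {kφ : ℕ × ((ℕ → E) → ℝ) // LogHolder α K kφ.1 kφ.2})
    (φ := fun i μ => ∫ x, i.1.2 x ∂(μ : Measure (ℕ → E)))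
    (fun i => i.2.memCb.continuous_integral)
    (fun μ ν hμν => ProbabilityMeasure.toMeasure_injective <|
      measure_ext_of_logHolder h.const_pos.le fun k φ hφ => hμν ⟨(k, φ), hφ⟩)
    (fun i μ ν => tendsto_integral_iterate_normalizedDual_sub h i.2 μ ν)
    (isCompact_closure_dominatedMarginals hp ENNReal.ofReal_ne_top) fun n => subset_closure <|
      (mapsTo_normalizedDual_dominatedMarginals h.memCb hfB).iterate n
        (infinitePi_mem_dominatedMarginals hD)

end NormalizedDual

theorem statement5_general {E : Type*} [MetricSpace E] [SecondCountableTopology E]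
    [MeasurableSpace E] [BorelSpace E] (p : Measure E) [IsProbabilityMeasure p]
    (hp : IsTightMeasureSet {p}) (α : ℝ) (hα : 0 < α) (f : (ℕ → E) → ℝ) (hf : MemHol α f) :
    ∃ (ν : Measure (ℕ → E)) (lam : ℝ), IsProbabilityMeasure ν ∧ 0 < lam ∧
      (∀ φ : (ℕ → E) → ℝ, MemCb φ → (∫ x, ruelle p f φ x ∂ν) = lam * ∫ x, φ x ∂ν) ∧
      lam = (∫ x, ruelle p f (fun _ => 1) x ∂ν) ∧
      ∀ (ν' : Measure (ℕ → E)) (lam' : ℝ), IsProbabilityMeasure ν' →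
        (∀ φ : (ℕ → E) → ℝ, MemCb φ → (∫ x, ruelle p f φ x ∂ν') = lam' * ∫ x, φ x ∂ν') →
        ν' = ν ∧ lam' = lam := by
  obtain ⟨K, K', hcontract⟩ := hf.exists_contractsLogHolder (p := p) hα
  obtain ⟨ν, hfix, hunique⟩ := existsUnique_isFixedPt_normalizedDual hp hcontract
  refine ⟨ν, ∫ x, ruelle p f (fun _ => 1) x ∂(ν : Measure (ℕ → E)), inferInstance,
    integral_iterate_ruelle_one_pos hcontract.memCb 1 ν,
    (isFixedPt_normalizedDual_iff hcontract.memCb).1 hfix, rfl, fun ν' lam' hν' hconf => ?_⟩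
  have hlam' : lam' = ∫ x, ruelle p f (fun _ => 1) x ∂ν' := IsConformal.eq_integral_ruelle_one hconf
  subst hlam'
  obtain rfl : ν' = ν := congrArg Subtype.val <|
    hunique ⟨ν', hν'⟩ ((isFixedPt_normalizedDual_iff hcontract.memCb).2 hconf)
  exact ⟨rfl, rfl⟩

/-- Existence and uniqueness of the conformal measure: there exists a
unique Borel probability measure `ν` and a `λ > 0` with `L_f^* ν = λ ν`; moreover
`λ = ∫ L_f 1 dν`. -/
theorem statement5 {E : Type*} [MetricSpace E] [CompleteSpace E]
    [TopologicalSpace.SeparableSpace E] [MeasurableSpace E] [BorelSpace E] [Nonempty E]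
    (p : Measure E) [IsProbabilityMeasure p]
    (α : ℝ) (hα0 : 0 < α) (hα1 : α < 1)
    (f : (ℕ → E) → ℝ) (hf : MemHol α f) :
    ∃ (ν : Measure (ℕ → E)) (lam : ℝ), IsProbabilityMeasure ν ∧ 0 < lam ∧
      (∀ φ : (ℕ → E) → ℝ, MemCb φ → (∫ x, ruelle p f φ x ∂ν) = lam * ∫ x, φ x ∂ν) ∧
      lam = (∫ x, ruelle p f (fun _ => 1) x ∂ν) ∧
      ∀ (ν' : Measure (ℕ → E)) (lam' : ℝ), IsProbabilityMeasure ν' → 0 < lam' →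
        (∀ φ : (ℕ → E) → ℝ, MemCb φ → (∫ x, ruelle p f φ x ∂ν') = lam' * ∫ x, φ x ∂ν') →
        ν' = ν ∧ lam' = lam := by
  have : SecondCountableTopology E := UniformSpace.secondCountable_of_separable E
  obtain ⟨ν, lam, hν, hlam, hconf, heq, hunique⟩ :=
    statement5_general p isTightMeasureSet_singleton α hα0 f hf
  exact ⟨ν, lam, hν, hlam, hconf, heq, fun ν' lam' hν' _ => hunique ν' lam' hν'⟩

end
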